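/- For every p ∈ [0,1], the pair (ᾱ(p), β̄(p)) belongs to the achievable storage-retrieval rate region R of the (2,2) PIR problem, where ᾱ(p) = 9/4 − H(1/4, 3/4) + (1/4)·H((1−p)/2, (1−p)/2, p/2, p/2) + (1/2)·H((2−p)/4, (2−p)/4, p/2) − (3/4)·H((3−2p)/6, (3−2p)/6, p/3, p/3) and β̄(p) = 5/8 + (1/4)·H((2−p)/4, (2−p)/4, p/2) − (1/8)·H((1−p)/2, (1−p)/2, p). -/

import Mathlib

open scoped BigOperators

namespace PIR

/-- Messages are length-`L` vectors over `F_2`. -/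
abbrev Msg (L : ℕ) := Fin L → ZMod 2

/-- A (2,2) PIR code (without the correctness condition) with message length `L`
and query alphabet `Q`.  The two messages are independent and uniform on `F_2^L`;
the queries are independent of the messages (built into the model: the query
distribution `P k` for desired message `k` does not depend on the messages). -/
structure CodeBase (L : ℕ) (Q : Type) [Fintype Q] [DecidableEq Q] where
  /-- query distribution for desired message index `k` -/
  P : Fin 2 → Q × Q → ℝ
  P_nonneg : ∀ k qq, 0 ≤ P k qq
  P_sum : ∀ k, ∑ qq : Q × Q, P k qq = 1
  /-- number of stored `F_2` symbols at database `n` -/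
  stor : Fin 2 → ℕ
  /-- storage encoders -/
  phi : (n : Fin 2) → Msg L × Msg L → (Fin (stor n) → ZMod 2)
  /-- answer lengths -/
  blen : Fin 2 → Q → ℕ
  /-- deterministic answer functions -/
  ans : (n : Fin 2) → (q : Q) → (Fin (stor n) → ZMod 2) → (Fin (blen n q) → ZMod 2)
  /-- decoding functions -/
  dec : (k : Fin 2) → (q₁ q₂ : Q) → (Fin (blen 0 q₁) → ZMod 2) →
      (Fin (blen 1 q₂) → ZMod 2) → Msg L
  /-- Privacy: for each database `n`, the joint distribution of
  `(Q_n^{[k]}, A_n^{[k]}, S_n)` is the same for `k = 1, 2`.  Since the answer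
  `A_n` is the fixed deterministic function `ans` of `(Q_n, S_n)` (not
  depending on `k`), this is expressed as equality of the joint distributions of
  `(Q_n, S_n)` (messages uniform, queries independent of messages). -/
  privacy : ∀ (n : Fin 2) (q : Q) (s : Fin (stor n) → ZMod 2),
    (∑ qq : Q × Q, if (if n = 0 then qq.1 else qq.2) = q then P 0 qq else 0) *
      ((Finset.univ.filter (fun w : Msg L × Msg L => phi n w = s)).card : ℝ) =
    (∑ qq : Q × Q, if (if n = 0 then qq.1 else qq.2) = q then P 1 qq else 0) *
      ((Finset.univ.filter (fun w : Msg L × Msg L => phi n w = s)).card : ℝ)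

variable {L : ℕ} {Q : Type} [Fintype Q] [DecidableEq Q]

/-- The desired message `W_k`. -/
def target (k : Fin 2) (w : Msg L × Msg L) : Msg L := if k = 0 then w.1 else w.2

/-- The decoder output `Ŵ_k` when the realized queries are `qq` and the messages `w`. -/
def retrieved (C : CodeBase L Q) (k : Fin 2) (qq : Q × Q) (w : Msg L × Msg L) : Msg L :=
  C.dec k qq.1 qq.2 (C.ans 0 qq.1 (C.phi 0 w)) (C.ans 1 qq.2 (C.phi 1 w))

/-- Zero-error correctness: `Ŵ_k = W_k` for all realizations. -/
def IsZeroError (C : CodeBase L Q) : Prop :=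
  ∀ (k : Fin 2) (w : Msg L × Msg L) (qq : Q × Q), C.P k qq ≠ 0 →
    retrieved C k qq w = target k w

/-- The average probability of error `P_e`. -/
noncomputable def Pe (C : CodeBase L Q) : ℝ :=
  (1/2) * ∑ k : Fin 2, ∑ w : Msg L × Msg L, ∑ qq : Q × Q,
    ((2:ℝ)^(2*L))⁻¹ * C.P k qq * (if retrieved C k qq w ≠ target k w then 1 else 0)

/-- The retrieval rate `β_n = E[β_n^{(Q_n)}]` (the marginal of `Q_n` is the same
for `k=1,2` by privacy; we use `k=1`, i.e. index `0`). -/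
noncomputable def betaRate (C : CodeBase L Q) (n : Fin 2) : ℝ :=
  ∑ qq : Q × Q, C.P 0 qq * (C.blen n (if n = 0 then qq.1 else qq.2) : ℝ)

/-- A linear PIR code: storage encoders and answer functions are `F_2`-linear. -/
def IsLinear (C : CodeBase L Q) : Prop :=
  (∀ n : Fin 2, IsLinearMap (ZMod 2) (C.phi n)) ∧
  (∀ (n : Fin 2) (q : Q), IsLinearMap (ZMod 2) (C.ans n q))

/-- A bundled PIR code (with its query alphabet). -/
structure Code (L : ℕ) where
  Q : Type
  [fQ : Fintype Q]
  [dQ : DecidableEq Q]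
  base : CodeBase L Q

attribute [instance] Code.fQ Code.dQ

/-- A normalized storage-retrieval pair `(ᾱ, β̄)` is achievable. -/
def Achievable (ab : ℝ × ℝ) : Prop :=
  ∀ ε > (0:ℝ), ∃ L₀ : ℕ, ∀ L ≥ L₀, ∃ C : Code L,
    IsZeroError C.base ∧
    ((C.base.stor 0 + C.base.stor 1 : ℕ) : ℝ) / 2 ≤ L * (ab.1 + ε) ∧
    (betaRate C.base 0 + betaRate C.base 1) / 2 ≤ L * (ab.2 + ε)

/-- Achievability by linear codes. -/
def LinAchievable (ab : ℝ × ℝ) : Prop :=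
  ∀ ε > (0:ℝ), ∃ L₀ : ℕ, ∀ L ≥ L₀, ∃ C : Code L,
    IsZeroError C.base ∧ IsLinear C.base ∧
    ((C.base.stor 0 + C.base.stor 1 : ℕ) : ℝ) / 2 ≤ L * (ab.1 + ε) ∧
    (betaRate C.base 0 + betaRate C.base 1) / 2 ≤ L * (ab.2 + ε)

/-- The achievable storage-retrieval rate region `R`. -/
def Region : Set (ℝ × ℝ) := { ab | Achievable ab }

/-- The query distribution used for the `(2,2)` PIR system: for message 1,
uniform on `{(1,1),(2,2)}`; for message 2, uniform on `{(1,2),(2,1)}`. -/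
noncomputable def stdP : Fin 2 → Fin 2 × Fin 2 → ℝ :=
  fun k qq => if (k = 0 ∧ qq.1 = qq.2) ∨ (k = 1 ∧ qq.1 ≠ qq.2) then 1/2 else 0


/-- The entropy function `H(p₁,…,p_t) = Σᵢ −pᵢ·log₂ pᵢ` of a probability vector
(with the convention `0·log₂ 0 = 0`, which holds since `Real.logb 2 0 = 0`). -/
noncomputable def hent (l : List ℝ) : ℝ := (l.map fun x => -(x * Real.logb 2 x)).sum

/-- The storage rate `ᾱ(p)` of Corollary 2. -/
noncomputable def alphaCurve (p : ℝ) : ℝ :=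
  9/4 - hent [1/4, 3/4] + (1/4) * hent [(1-p)/2, (1-p)/2, p/2, p/2]
    + (1/2) * hent [(2-p)/4, (2-p)/4, p/2]
    - (3/4) * hent [(3-2*p)/6, (3-2*p)/6, p/3, p/3]

/-- The retrieval rate `β̄(p)` of Corollary 2. -/
noncomputable def betaCurve (p : ℝ) : ℝ :=
  5/8 + (1/4) * hent [(2-p)/4, (2-p)/4, p/2] - (1/8) * hent [(1-p)/2, (1-p)/2, p]


/-!
Split `2 * m + 2 * k` bits off each message and view them as a subset, so that a pair of messages
carries a pair of subsets. Suppose the two subsets meet in `m` elements, miss `m` others and have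
differences of size `k`. Knowing the intersection, one recovers either subset from the matching
difference; knowing the complement of the union, from the other difference. So the first database
returns one of these two `m`-sets and the second database identifies one of the two `k`-sets, and
neither query alone reveals which message is wanted.

A difference is a `k`-set avoiding a known `m`-set, so among the `(m + 2 * k).choose k` candidates
a hash into a slightly larger range identifies it, and the second database need not know the
`m`-set. Any pair becomes balanced in this sense under a suitable shift. By a union bound over all
pairs, a family of random shifts and hash functions that is larger only by a polynomial factor than
`4 ^ (2 * m + 2 * k)` over the number of balanced pairs contains a suitable member for every pair;
the first database stores and transmits its index. By Stirling's formula the code lengths have the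
claimed limits, where `m ≈ L / 4` and `k ≈ (1 - p) * L / 4` give the curve.
-/

section RandomSelection

open Finset

open Classical in
/- Independent uniform parameters all miss a given `w` with probability at most
`(1 - δ) ^ M ≤ exp (-δ * M)`, so a union bound over `w` applies. -/
lemma exists_fin_cover {W Θ : Type*} [Fintype W] [Fintype Θ] [Nonempty Θ] (R : W → Θ → Prop)
    {δ : ℝ} {M : ℕ} (hδ : ∀ w, δ * Fintype.card Θ ≤ #{θ | R w θ})
    (hM : Real.log (Fintype.card W) < δ * M) :
    ∃ f : Fin M → Θ, ∀ w, ∃ i, R w (f i) := by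
  by_contra! hmiss
  obtain ⟨w₀, -⟩ := hmiss fun _ => Classical.arbitrary Θ
  have hW : (0 : ℝ) < Fintype.card W := by exact_mod_cast Fintype.card_pos_iff.2 ⟨w₀⟩
  have : (0 : ℝ) < Fintype.card Θ := by exact_mod_cast Fintype.card_pos
  have hcover : (univ : Finset (Fin M → Θ)) ⊆
      univ.biUnion fun w => Fintype.piFinset fun _ => ({θ | ¬ R w θ} : Finset Θ) := by
    intro f _
    simpa using hmiss f
  have hfail (w : W) : (#{θ | ¬ R w θ} : ℝ) ≤ Real.exp (-δ) * Fintype.card Θ := by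
    have hsplit : (#{θ | R w θ} : ℝ) + #{θ | ¬ R w θ} = Fintype.card Θ := by
      exact_mod_cast card_filter_add_card_filter_not (s := univ) (R w)
    nlinarith [hδ w, Real.one_sub_le_exp_neg δ]
  have hcount : (Fintype.card Θ : ℝ) ^ M ≤ ∑ w : W, (#{θ | ¬ R w θ} : ℝ) ^ M := by
    have := (card_le_card hcover).trans card_biUnion_le
    simp only [card_univ, Fintype.card_fun, Fintype.card_piFinset, prod_const,
      Fintype.card_fin] at this
    exact_mod_cast this
  refine hcount.not_gt ?_
  calc ∑ w : W, (#{θ | ¬ R w θ} : ℝ) ^ M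
      ≤ ∑ _ : W, (Real.exp (-δ) * Fintype.card Θ) ^ M := by gcongr; exact hfail _
    _ = Real.exp (Real.log (Fintype.card W) - δ * M) * (Fintype.card Θ : ℝ) ^ M := by
        rw [sum_const, card_univ, nsmul_eq_mul, mul_pow, ← Real.exp_nat_mul, ← mul_assoc,
          sub_eq_add_neg, Real.exp_add, Real.exp_log hW]
        ring_nf
    _ < 1 * (Fintype.card Θ : ℝ) ^ M := by
        gcongr
        exact Real.exp_lt_one_iff.2 (sub_neg.2 hM)
    _ = (Fintype.card Θ : ℝ) ^ M := one_mul _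

variable {α β : Type*} [Fintype α] [DecidableEq α] [Fintype β] [DecidableEq β]

lemma card_filter_apply_eq_mul_card {a a' : α} (h : a ≠ a') :
    #{f : α → β | f a = f a'} * Fintype.card β = Fintype.card (α → β) := by
  have hrestrict : #{f : α → β | f a = f a'} = #(univ : Finset ({z // z ≠ a} → β)) :=
    card_nbij' (fun f z => f z) (fun g z => if hz : z = a then g ⟨a', h.symm⟩ else g ⟨z, hz⟩)
      (by simp) (by simp [Set.MapsTo, h.symm]) (by
        intro f hf
        ext z
        by_cases hz : z = a <;> simp_all)
      (by
        intro g _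
        ext ⟨z, hz⟩
        simp [hz])
  have hα : 0 < Fintype.card α := Fintype.card_pos_iff.2 ⟨a⟩
  rw [hrestrict, card_univ, Fintype.card_fun, Fintype.card_fun, Fintype.card_subtype_compl,
    Fintype.card_subtype_eq, ← pow_succ, Nat.sub_add_cancel hα]

lemma card_filter_exists_apply_eq_mul_card_le (P : Finset (α × α)) (hP : ∀ p ∈ P, p.1 ≠ p.2) :
    #{f : α → β | ∃ p ∈ P, f p.1 = f p.2} * Fintype.card β ≤ #P * Fintype.card (α → β) := by
  have hunion : ({f : α → β | ∃ p ∈ P, f p.1 = f p.2} : Finset (α → β)) =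
      P.biUnion fun p => {f | f p.1 = f p.2} := by
    ext f
    simp
  calc #{f : α → β | ∃ p ∈ P, f p.1 = f p.2} * Fintype.card β
      ≤ (∑ p ∈ P, #{f : α → β | f p.1 = f p.2}) * Fintype.card β := by
        rw [hunion]
        gcongr
        exact card_biUnion_le
    _ = ∑ _ ∈ P, Fintype.card (α → β) := by
        rw [sum_mul]
        exact sum_congr rfl fun _ hp => card_filter_apply_eq_mul_card (hP _ hp)
    _ = #P * Fintype.card (α → β) := by rw [sum_const, smul_eq_mul]

end RandomSelection

section SetPairs

open Finset

lemma card_filter_fst_mem_and {α β : Type*} [Fintype α] [Fintype β] [DecidableEq α] (s : Finset α)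
    (R : α → β → Prop) [∀ a, DecidablePred (R a)] :
    #{u : α × β | u.1 ∈ s ∧ R u.1 u.2} = ∑ a ∈ s, #{b | R a b} := by
  simp only [card_filter, Fintype.sum_prod_type, ite_and, sum_ite_irrel, sum_const_zero,
    sum_ite_mem, univ_inter]

variable {ι : Type*} [Fintype ι] [DecidableEq ι] {m k : ℕ}

lemma card_filter_inter_sdiff (a : Finset ι) :
    #{b : Finset ι | #(a ∩ b) = m ∧ #(b \ a) = k} =
      (#a).choose m * (Fintype.card ι - #a).choose k := by
  have hinter {x y : Finset ι} (hx : x ⊆ a) (hy : Disjoint y a) : a ∩ (x ∪ y) = x := by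
    rw [inter_union_distrib_left, inter_eq_right.2 hx, disjoint_iff_inter_eq_empty.1 hy.symm,
      union_empty]
  have hsdiff {x y : Finset ι} (hx : x ⊆ a) (hy : Disjoint y a) : (x ∪ y) \ a = y := by
    rw [union_sdiff_distrib, sdiff_eq_empty_iff_subset.2 hx, empty_union, hy.sdiff_eq_left]
  have hmem (p : Finset ι × Finset ι) : p ∈ powersetCard m a ×ˢ powersetCard k aᶜ ↔
      (p.1 ⊆ a ∧ #p.1 = m) ∧ Disjoint p.2 a ∧ #p.2 = k := by
    rw [mem_product, mem_powersetCard, mem_powersetCard, subset_compl_iff_disjoint_right]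
  rw [← card_powersetCard, ← card_compl, ← card_powersetCard, ← card_product]
  refine card_nbij' (fun b => (a ∩ b, b \ a)) (fun p => p.1 ∪ p.2) ?_ ?_ ?_ ?_
  · intro b hb
    rw [mem_coe, mem_filter_univ] at hb
    exact (hmem _).2 ⟨⟨inter_subset_left, hb.1⟩, sdiff_disjoint, hb.2⟩
  · intro p hp
    obtain ⟨⟨hx, hxcard⟩, hy, hycard⟩ := (hmem p).1 hp
    simp [hinter hx hy, hsdiff hx hy, hxcard, hycard]
  · intro b _
    change a ∩ b ∪ b \ a = b
    rw [inter_comm, union_comm, sdiff_union_inter]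
  · intro p hp
    obtain ⟨⟨hx, -⟩, hy, -⟩ := (hmem p).1 hp
    exact Prod.ext (hinter hx hy) (hsdiff hx hy)

variable (ι) in
/-- The pairs of subsets whose intersection has size `m` and whose two differences have size `k`.
On a ground set of size `2 * m + 2 * k` the complement of the union then has size `m` as well. -/
def balancedPairs (m k : ℕ) : Finset (Finset ι × Finset ι) :=
  {u | #(u.1 ∩ u.2) = m ∧ #(u.1 \ u.2) = k ∧ #(u.2 \ u.1) = k}

lemma mem_balancedPairs {u : Finset ι × Finset ι} :
    u ∈ balancedPairs ι m k ↔ #(u.1 ∩ u.2) = m ∧ #(u.1 \ u.2) = k ∧ #(u.2 \ u.1) = k := by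
  simp [balancedPairs]

lemma card_balancedPairs (hι : Fintype.card ι = 2 * m + 2 * k) :
    #(balancedPairs ι m k) =
      (2 * m + 2 * k).choose (m + k) * ((m + k).choose m * (m + k).choose k) := by
  have hfirst (u : Finset ι × Finset ι) : u ∈ balancedPairs ι m k ↔
      u.1 ∈ powersetCard (m + k) univ ∧ #(u.1 ∩ u.2) = m ∧ #(u.2 \ u.1) = k := by
    have := card_inter_add_card_sdiff u.1 u.2
    rw [mem_balancedPairs, mem_powersetCard_univ]
    omega
  have hsecond (a) (ha : a ∈ powersetCard (m + k) (univ : Finset ι)) :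
      #{b | #(a ∩ b) = m ∧ #(b \ a) = k} = (m + k).choose m * (m + k).choose k := by
    rw [card_filter_inter_sdiff, mem_powersetCard_univ.1 ha, hι]
    congr 2
    omega
  rw [← card_univ] at hι
  rw [← hι, ← card_powersetCard, ← sum_const_nat hsecond, ← card_filter_fst_mem_and]
  congr 1
  ext u
  simp [hfirst]

lemma card_balancedPairs_pos (hι : Fintype.card ι = 2 * m + 2 * k) :
    0 < #(balancedPairs ι m k) := by
  rw [card_balancedPairs hι]
  exact Nat.mul_pos (Nat.choose_pos (by omega))
    (Nat.mul_pos (Nat.choose_pos (by omega)) (Nat.choose_pos (by omega)))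

variable (ι) in
/-- The pairs of disjoint subsets of size `m`. -/
def disjointPairs (m : ℕ) : Finset (Finset ι × Finset ι) :=
  {u | Disjoint u.1 u.2 ∧ #u.1 = m ∧ #u.2 = m}

lemma mem_disjointPairs {u : Finset ι × Finset ι} :
    u ∈ disjointPairs ι m ↔ Disjoint u.1 u.2 ∧ #u.1 = m ∧ #u.2 = m := by
  simp [disjointPairs]

lemma card_disjointPairs :
    #(disjointPairs ι m) = (Fintype.card ι).choose m * (Fintype.card ι - m).choose m := by
  have hsecond (a) (ha : a ∈ powersetCard m (univ : Finset ι)) :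
      #{b | Disjoint a b ∧ #b = m} = (Fintype.card ι - m).choose m := by
    have := card_filter_inter_sdiff (m := 0) (k := m) a
    rw [mem_powersetCard_univ.1 ha, Nat.choose_zero_right, one_mul] at this
    rw [← this]
    congr 1
    ext b
    simp only [mem_filter_univ, card_eq_zero, ← disjoint_iff_inter_eq_empty]
    refine and_congr_right fun hab => ?_
    rw [hab.symm.sdiff_eq_left]
  rw [← card_univ (α := ι), ← card_powersetCard, card_univ, ← sum_const_nat hsecond,
    ← card_filter_fst_mem_and]
  congr 1
  ext u
  simp only [mem_disjointPairs, mem_filter_univ, mem_powersetCard_univ]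
  tauto

end SetPairs

section ResolvingSeeds

open Finset

/-- The entry of a pair selected by the message index `j`, as in `target`. -/
def component {α : Type*} (j : Fin 2) (u : α × α) : α := if j = 0 then u.1 else u.2

lemma component_apply_zero_one {α : Type*} (f : Fin 2 → α) (j : Fin 2) :
    component j (f 0, f 1) = f j := by
  fin_cases j <;> rfl

variable {ι : Type*} [Fintype ι] [DecidableEq ι] {m k : ℕ}

/-- The part of a pair of sets on which both agree: the common elements for `q = 0`, the common
non-elements for `q = 1`. It is what the first database reveals on query `q`. -/
def commonPart (q : Fin 2) (u : Finset ι × Finset ι) : Finset ι :=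
  if q = 0 then u.1 ∩ u.2 else (u.1 ∪ u.2)ᶜ

/-- The elements belonging to exactly one of the two sets, the first one for `r = 0` and the second
one for `r = 1`. The second database reveals a hash of it on query `r`. -/
def privatePart (r : Fin 2) (u : Finset ι × Finset ι) : Finset ι :=
  if r = 0 then u.1 \ u.2 else u.2 \ u.1

lemma privatePart_subset_compl_commonPart (q r : Fin 2) (u : Finset ι × Finset ι) :
    privatePart r u ⊆ (commonPart q u)ᶜ := by
  intro i
  fin_cases q <;> fin_cases r <;> simp [commonPart, privatePart] <;> tauto

lemma component_eq_of_commonPart_eq {j q : Fin 2} {u u' : Finset ι × Finset ι}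
    (hcommon : commonPart q u = commonPart q u')
    (hprivate : privatePart (q + j) u = privatePart (q + j) u') :
    component j u = component j u' := by
  have hunion (u : Finset ι × Finset ι) : component j u =
      if q = 0 then commonPart q u ∪ privatePart (q + j) u
      else (commonPart q u ∪ privatePart (q + j) u)ᶜ := by
    ext i
    fin_cases q <;> fin_cases j <;> simp [commonPart, privatePart, component] <;> tauto
  rw [hunion, hunion, hcommon, hprivate]

lemma card_commonPart (hι : Fintype.card ι = 2 * m + 2 * k) {u : Finset ι × Finset ι}
    (hu : u ∈ balancedPairs ι m k) (q : Fin 2) : #(commonPart q u) = m := by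
  obtain ⟨hinter, hsdiff, hsdiff'⟩ := mem_balancedPairs.1 hu
  have := card_inter_add_card_sdiff u.1 u.2
  have := card_sdiff_add_card u.2 u.1
  rw [commonPart]
  split_ifs
  · exact hinter
  · rw [card_compl, union_comm]
    omega

lemma card_privatePart {u : Finset ι × Finset ι} (hu : u ∈ balancedPairs ι m k) (r : Fin 2) :
    #(privatePart r u) = k := by
  obtain ⟨-, hsdiff, hsdiff'⟩ := mem_balancedPairs.1 hu
  rw [privatePart]
  split_ifs <;> assumption

/-- The pairs of sets that a hash must tell apart so that each private part of `u` can be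
recognised, by its hash, among the `k`-sets avoiding a given common part of `u`. -/
def confusablePairs (k : ℕ) (u : Finset ι × Finset ι) : Finset (Finset ι × Finset ι) :=
  univ.biUnion fun qr : Fin 2 × Fin 2 =>
    (powersetCard k (commonPart qr.1 u)ᶜ).erase (privatePart qr.2 u) ×ˢ {privatePart qr.2 u}

lemma mem_confusablePairs {u p : Finset ι × Finset ι} :
    p ∈ confusablePairs k u ↔ ∃ q r, p.2 = privatePart r u ∧ p.1 ≠ p.2 ∧
      p.1 ⊆ (commonPart q u)ᶜ ∧ #p.1 = k := by
  simp only [confusablePairs, mem_biUnion, mem_univ, true_and, mem_product, mem_erase,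
    mem_singleton, mem_powersetCard, Prod.exists]
  refine exists₂_congr fun q r => ⟨?_, ?_⟩
  · rintro ⟨⟨hne, hp⟩, heq⟩
    exact ⟨heq, heq ▸ hne, hp⟩
  · rintro ⟨heq, hne, hp⟩
    exact ⟨⟨heq ▸ hne, hp⟩, heq⟩

lemma card_confusablePairs_le (hι : Fintype.card ι = 2 * m + 2 * k) {u : Finset ι × Finset ι}
    (hu : u ∈ balancedPairs ι m k) : #(confusablePairs k u) ≤ 4 * (m + 2 * k).choose k := by
  refine card_biUnion_le_card_mul _ _ _ fun qr _ => ?_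
  rw [card_product, card_singleton, mul_one]
  refine (card_erase_le).trans_eq ?_
  rw [card_powersetCard, card_compl, card_commonPart hι hu, hι]
  congr 1
  omega

variable {β : Type*}

lemma card_le_two_mul_card_filter_hash [Fintype β] [DecidableEq β]
    (hι : Fintype.card ι = 2 * m + 2 * k) (hβ : 8 * (m + 2 * k).choose k ≤ Fintype.card β)
    {u : Finset ι × Finset ι} (hu : u ∈ balancedPairs ι m k) :
    Fintype.card (Finset ι → β) ≤
      2 * #{h : Finset ι → β | ∀ p ∈ confusablePairs k u, h p.1 ≠ h p.2} := by
  set bad := #{h : Finset ι → β | ∃ p ∈ confusablePairs k u, h p.1 = h p.2} with hbad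
  have hsplit : bad + #{h : Finset ι → β | ∀ p ∈ confusablePairs k u, h p.1 ≠ h p.2} =
      Fintype.card (Finset ι → β) := by
    rw [← card_univ, ← card_filter_add_card_filter_not (s := univ)
      fun h : Finset ι → β => ∃ p ∈ confusablePairs k u, h p.1 = h p.2]
    simp [hbad]
  have hbadle : 4 * (m + 2 * k).choose k * (2 * bad) ≤
      4 * (m + 2 * k).choose k * Fintype.card (Finset ι → β) :=
    calc 4 * (m + 2 * k).choose k * (2 * bad)
        = bad * (8 * (m + 2 * k).choose k) := by ring
      _ ≤ bad * Fintype.card β := by gcongr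
      _ ≤ #(confusablePairs k u) * Fintype.card (Finset ι → β) :=
          card_filter_exists_apply_eq_mul_card_le _ fun p hp =>
            have ⟨_, _, _, hne, _⟩ := mem_confusablePairs.1 hp
            hne
      _ ≤ 4 * (m + 2 * k).choose k * Fintype.card (Finset ι → β) := by
          gcongr
          exact card_confusablePairs_le hι hu
  have hpos : 0 < (m + 2 * k).choose k := Nat.choose_pos (by omega)
  have := Nat.le_of_mul_le_mul_left hbadle (by omega)
  omega

/-- A seed consists of a shift and a hash function. It resolves `v` if shifting `v` produces a
balanced pair whose private parts are not confused with other sets by the hash. -/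
def Resolves (m k : ℕ) (v : Finset ι × Finset ι) (θ : (Finset ι × Finset ι) × (Finset ι → β)) :
    Prop :=
  symmDiff θ.1 v ∈ balancedPairs ι m k ∧
    ∀ p ∈ confusablePairs k (symmDiff θ.1 v), θ.2 p.1 ≠ θ.2 p.2

lemma Resolves.component_eq {v v' : Finset ι × Finset ι}
    {θ : (Finset ι × Finset ι) × (Finset ι → β)} (hv : Resolves m k v θ) (hv' : Resolves m k v' θ)
    {j q : Fin 2} (hcommon : commonPart q (symmDiff θ.1 v) = commonPart q (symmDiff θ.1 v'))
    (hhash : θ.2 (privatePart (q + j) (symmDiff θ.1 v)) =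
      θ.2 (privatePart (q + j) (symmDiff θ.1 v'))) :
    component j v = component j v' := by
  have hprivate : privatePart (q + j) (symmDiff θ.1 v) = privatePart (q + j) (symmDiff θ.1 v') := by
    by_contra hne
    refine hv.2 (_, _) (mem_confusablePairs.2 ⟨q, q + j, rfl, Ne.symm hne, ?_, ?_⟩) hhash.symm
    · exact hcommon ▸ privatePart_subset_compl_commonPart q (q + j) _
    · exact card_privatePart hv'.1 _
  have hshift (v : Finset ι × Finset ι) :
      component j (symmDiff θ.1 v) = symmDiff (component j θ.1) (component j v) := by
    unfold component
    split_ifs <;> rfl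
  have := component_eq_of_commonPart_eq hcommon hprivate
  rwa [hshift, hshift, symmDiff_right_inj] at this

open Classical in
lemma card_balancedPairs_mul_card_le [Fintype β]
    (hι : Fintype.card ι = 2 * m + 2 * k) (hβ : 8 * (m + 2 * k).choose k ≤ Fintype.card β)
    (v : Finset ι × Finset ι) :
    #(balancedPairs ι m k) * Fintype.card (Finset ι → β) ≤
      2 * #{θ : (Finset ι × Finset ι) × (Finset ι → β) | Resolves m k v θ} := by
  have hshift : #{θ : (Finset ι × Finset ι) × (Finset ι → β) | Resolves m k v θ} =
      #{θ : (Finset ι × Finset ι) × (Finset ι → β) | θ.1 ∈ balancedPairs ι m k ∧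
        ∀ p ∈ confusablePairs k θ.1, θ.2 p.1 ≠ θ.2 p.2} :=
    card_equiv ((symmDiff_left_involutive v).toPerm.prodCongr (.refl _)) fun θ => by
      simp [Resolves]
  rw [hshift, card_filter_fst_mem_and _
    fun u (h : Finset ι → β) => ∀ p ∈ confusablePairs k u, h p.1 ≠ h p.2, mul_sum, ← smul_eq_mul,
    ← sum_const]
  exact sum_le_sum fun u hu => card_le_two_mul_card_filter_hash hι hβ hu

lemma exists_resolving_seeds [Fintype β] (hι : Fintype.card ι = 2 * m + 2 * k)
    (hβ : 8 * (m + 2 * k).choose k ≤ Fintype.card β) :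
    ∃ M, M * #(balancedPairs ι m k) ≤ (4 * Fintype.card ι + 1) * 4 ^ Fintype.card ι ∧
      ∃ seed : Fin M → (Finset ι × Finset ι) × (Finset ι → β),
        ∀ v, ∃ i, Resolves m k v (seed i) := by
  classical
  set n := Fintype.card ι
  set N := #(balancedPairs ι m k)
  have hpairs : Fintype.card (Finset ι × Finset ι) = 4 ^ n := by
    rw [Fintype.card_prod, Fintype.card_finset, ← mul_pow]
    norm_num [n]
  have hNpos : 0 < N := card_balancedPairs_pos hι
  have hNle : N ≤ 4 ^ n := hpairs ▸ card_le_univ _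
  have hlt : 4 * n * 4 ^ n < N * (4 * n * 4 ^ n / N + 1) := Nat.lt_mul_div_succ _ hNpos
  have hle : N * (4 * n * 4 ^ n / N) ≤ 4 * n * 4 ^ n := Nat.mul_div_le _ _
  have : Nonempty β := Fintype.card_pos_iff.1 <|
    (Nat.mul_pos (by norm_num) (Nat.choose_pos (by omega : k ≤ m + 2 * k))).trans_le hβ
  refine ⟨4 * n * 4 ^ n / N + 1, by nlinarith,
    exists_fin_cover (fun v θ => Resolves m k v θ) (δ := N / (2 * 4 ^ n)) (fun v => ?_) ?_⟩
  · have hmany : (N * Fintype.card (Finset ι → β) : ℝ) ≤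
        2 * #{θ : (Finset ι × Finset ι) × (Finset ι → β) | Resolves m k v θ} := by
      exact_mod_cast card_balancedPairs_mul_card_le hι hβ v
    rw [Fintype.card_prod, hpairs]
    push_cast
    field_simp
    linarith
  · have hlog : Real.log 4 ≤ 2 := by
      rw [show (4 : ℝ) = 2 ^ 2 by norm_num, Real.log_pow]
      have := Real.log_two_lt_d9
      norm_num
      linarith
    calc Real.log (Fintype.card (Finset ι × Finset ι)) = n * Real.log 4 := by
          rw [hpairs]
          push_cast
          rw [Real.log_pow]
      _ ≤ n * 2 := by gcongr
      _ < N / (2 * 4 ^ n) * (4 * n * 4 ^ n / N + 1 : ℕ) := by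
          have : (4 * n * 4 ^ n : ℝ) < N * (4 * n * 4 ^ n / N + 1 : ℕ) := by exact_mod_cast hlt
          rw [div_mul_eq_mul_div, lt_div_iff₀ (by positivity)]
          linarith

end ResolvingSeeds

section Schemes

lemma stdP_nonneg (k : Fin 2) (qq : Fin 2 × Fin 2) : 0 ≤ stdP k qq := by
  unfold stdP
  split_ifs <;> norm_num

lemma sum_stdP_eq_half (n k q : Fin 2) :
    ∑ qq : Fin 2 × Fin 2, (if (if n = 0 then qq.1 else qq.2) = q then stdP k qq else 0) =
      1 / 2 := by
  rw [Fintype.sum_prod_type]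
  fin_cases n <;> fin_cases k <;> fin_cases q <;> simp [stdP]

lemma sum_stdP (k : Fin 2) : ∑ qq : Fin 2 × Fin 2, stdP k qq = 1 := by
  rw [Fintype.sum_prod_type]
  fin_cases k <;> norm_num [stdP]

lemma eq_add_of_stdP_ne_zero {k : Fin 2} {qq : Fin 2 × Fin 2} (h : stdP k qq ≠ 0) :
    qq.2 = qq.1 + k := by
  replace h := (ite_ne_right_iff.1 h).1
  revert k qq
  decide

/-- An injective binary labelling of a finite type by words of the least possible length. -/
noncomputable def bits (T : Type*) [Fintype T] :
    T ↪ (Fin (Nat.clog 2 (Fintype.card T)) → ZMod 2) :=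
  (Function.Embedding.nonempty_of_card_le (by
    simpa [ZMod.card] using Nat.le_pow_clog one_lt_two (Fintype.card T))).some

/-- A retrieval scheme for the query distribution `stdP`, with stored data and answers in arbitrary
types. Database `i` stores `storeᵢ`, and on query `q` it returns `answerᵢ q` of its content. Under
`stdP` the second query is the sum of the first query and the index of the desired message. -/
structure Scheme (L : ℕ) (S₀ S₁ A₀ A₁ : Type*) where
  store₀ : Msg L × Msg L → S₀
  store₁ : Msg L × Msg L → S₁
  answer₀ : Fin 2 → S₀ → A₀
  answer₁ : Fin 2 → S₁ → A₁
  target_factorsThrough (j q : Fin 2) :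
    (target j).FactorsThrough fun w => (answer₀ q (store₀ w), answer₁ (q + j) (store₁ w))

namespace Scheme

variable {L : ℕ} {S₀ S₁ A₀ A₁ : Type*} [Fintype S₀] [Fintype S₁] [Fintype A₀] [Fintype A₁]

/-- The PIR code obtained from a scheme by writing all stored data and all answers in binary. -/
noncomputable def toCodeBase (C : Scheme L S₀ S₁ A₀ A₁) : CodeBase L (Fin 2) where
  P := stdP
  P_nonneg := stdP_nonneg
  P_sum := sum_stdP
  stor := ![Nat.clog 2 (Fintype.card S₀), Nat.clog 2 (Fintype.card S₁)]
  phi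
    | 0 => fun w => bits S₀ (C.store₀ w)
    | 1 => fun w => bits S₁ (C.store₁ w)
  blen n _ := ![Nat.clog 2 (Fintype.card A₀), Nat.clog 2 (Fintype.card A₁)] n
  ans
    | 0 => fun q => Function.extend (bits S₀) (fun s => bits A₀ (C.answer₀ q s)) 0
    | 1 => fun q => Function.extend (bits S₁) (fun s => bits A₁ (C.answer₁ q s)) 0
  dec j q₀ q₁ x y :=
    Function.extend
      (fun w => (bits A₀ (C.answer₀ q₀ (C.store₀ w)), bits A₁ (C.answer₁ q₁ (C.store₁ w))))
      (target j) 0 (x, y)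
  privacy n q s := by rw [sum_stdP_eq_half, sum_stdP_eq_half]

lemma isZeroError_toCodeBase (C : Scheme L S₀ S₁ A₀ A₁) : IsZeroError C.toCodeBase := by
  rintro j w ⟨q, q'⟩ hq
  obtain rfl : q' = q + j := eq_add_of_stdP_ne_zero hq
  have hans₀ : C.toCodeBase.ans 0 q (C.toCodeBase.phi 0 w) = bits A₀ (C.answer₀ q (C.store₀ w)) :=
    (bits S₀).injective.extend_apply (fun s => bits A₀ (C.answer₀ _ s)) 0 (C.store₀ w)
  have hans₁ : C.toCodeBase.ans 1 (q + j) (C.toCodeBase.phi 1 w) =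
      bits A₁ (C.answer₁ (q + j) (C.store₁ w)) :=
    (bits S₁).injective.extend_apply (fun s => bits A₁ (C.answer₁ _ s)) 0 (C.store₁ w)
  rw [retrieved, hans₀, hans₁]
  refine Function.FactorsThrough.extend_apply (fun w w' h => ?_) _ w
  rw [Prod.mk.injEq, (bits A₀).apply_eq_iff_eq, (bits A₁).apply_eq_iff_eq] at h
  exact C.target_factorsThrough j q (Prod.ext h.1 h.2)

lemma betaRate_toCodeBase (C : Scheme L S₀ S₁ A₀ A₁) (n : Fin 2) :
    betaRate C.toCodeBase n = C.toCodeBase.blen n 0 := by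
  change ∑ qq, stdP 0 qq * (C.toCodeBase.blen n 0 : ℝ) = _
  rw [← Finset.sum_mul, sum_stdP, one_mul]

end Scheme

end Schemes

section SubsetScheme

open Finset

variable {L m k : ℕ} {ι R I β : Type*}

/-- The pair of subsets carried by a pair of messages, when `E` splits a message into a subset of
`ι` and a remainder. -/
def messageSets (E : Msg L ≃ Finset ι × R) (w : Msg L × Msg L) : Finset ι × Finset ι :=
  ((E w.1).1, (E w.2).1)

/-- The pair of remainders carried by a pair of messages, see `messageSets`. -/
def messageRests (E : Msg L ≃ Finset ι × R) (w : Msg L × Msg L) : R × R :=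
  ((E w.1).2, (E w.2).2)

lemma apply_target_eq (E : Msg L ≃ Finset ι × R) (j : Fin 2) (w : Msg L × Msg L) :
    E (target j w) = (component j (messageSets E w), component j (messageRests E w)) := by
  unfold target component
  split_ifs <;> rfl

variable [Fintype ι] [DecidableEq ι]

lemma commonPart_mem_disjointPairs (hι : Fintype.card ι = 2 * m + 2 * k)
    {u : Finset ι × Finset ι} (hu : u ∈ balancedPairs ι m k) :
    (commonPart 0 u, commonPart 1 u) ∈ disjointPairs ι m :=
  mem_disjointPairs.2 ⟨disjoint_compl_right.mono_left inter_subset_union,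
    card_commonPart hι hu 0, card_commonPart hι hu 1⟩

lemma component_mem_powersetCard {p : Finset ι × Finset ι} (hp : p ∈ disjointPairs ι m)
    (q : Fin 2) : component q p ∈ powersetCard m (univ : Finset ι) := by
  obtain ⟨-, h₁, h₂⟩ := mem_disjointPairs.1 hp
  rw [mem_powersetCard_univ, component]
  split_ifs <;> assumption

/-- The retrieval scheme given by a family of seeds and a choice `index` of a resolving seed for
every pair of sets. The first database stores the index, the remainders and both common parts of
the shifted pair, and transmits one of the common parts along with the rest. The second database
stores the hashes of both private parts, and transmits one of them. -/
def subsetScheme (hι : Fintype.card ι = 2 * m + 2 * k) (E : Msg L ≃ Finset ι × R)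
    (seed : I → (Finset ι × Finset ι) × (Finset ι → β)) (index : Finset ι × Finset ι → I)
    (hindex : ∀ v, Resolves m k v (seed (index v))) :
    Scheme L (I × (R × R) × disjointPairs ι m) (β × β)
      (I × (R × R) × powersetCard m (univ : Finset ι)) β where
  store₀ w :=
    let v := messageSets E w
    (index v, messageRests E w, ⟨_, commonPart_mem_disjointPairs hι (hindex v).1⟩)
  store₁ w :=
    let v := messageSets E w
    let θ := seed (index v)
    (θ.2 (privatePart 0 (symmDiff θ.1 v)), θ.2 (privatePart 1 (symmDiff θ.1 v)))
  answer₀ q s := (s.1, s.2.1, ⟨component q s.2.2.1, component_mem_powersetCard s.2.2.2 q⟩)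
  answer₁ q s := component q s
  target_factorsThrough j q w w' h := by
    obtain ⟨⟨hi, hrests, hcommon⟩, hhash⟩ := by
      simpa only [Prod.mk.injEq, Subtype.mk.injEq] using h
    have hv := hindex (messageSets E w)
    have hv' := hindex (messageSets E w')
    rw [hi] at hv hcommon hhash
    rw [component_apply_zero_one (commonPart · _), component_apply_zero_one (commonPart · _)]
      at hcommon
    rw [component_apply_zero_one fun r => (seed _).2 (privatePart r _),
      component_apply_zero_one fun r => (seed _).2 (privatePart r _)] at hhash
    apply E.injective
    rw [apply_target_eq, apply_target_eq, hv.component_eq hv' hcommon hhash, hrests]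

end SubsetScheme

section FiniteRates

open Finset

open scoped Nat

lemma clog_two_le_logb_add_one (x : ℕ) : (Nat.clog 2 x : ℝ) ≤ Real.logb 2 x + 1 := by
  rw [← Real.natCeil_logb_natCast]
  refine (Nat.ceil_lt_add_one ?_).le
  rcases Nat.eq_zero_or_pos x with rfl | hx
  · simp
  · exact Real.logb_nonneg one_lt_two (by exact_mod_cast hx)

lemma logb_choose_of_eq_add (b : ℝ) {n i j : ℕ} (hn : n = i + j) : Real.logb b (n.choose j : ℕ) =
    Real.logb b n ! - Real.logb b i ! - Real.logb b j ! := by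
  subst hn
  have hne (a : ℕ) : (a ! : ℝ) ≠ 0 := by exact_mod_cast a.factorial_ne_zero
  have hchoose : ((i + j).choose j : ℝ) ≠ 0 := by exact_mod_cast (Nat.choose_pos (by omega)).ne'
  have : ((i + j)! : ℝ) = (i + j).choose j * i ! * j ! := by
    exact_mod_cast (Nat.add_choose_mul_factorial_mul_factorial i j).symm
  rw [this, Real.logb_mul (mul_ne_zero hchoose (hne i)) (hne j), Real.logb_mul hchoose (hne i)]
  ring

lemma logb_natCast_mul (b : ℝ) {x y : ℕ} (hx : 0 < x) (hy : 0 < y) :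
    Real.logb b (x * y : ℕ) = Real.logb b x + Real.logb b y := by
  rw [Nat.cast_mul, Real.logb_mul (by positivity) (by positivity)]

lemma logb_two_four_pow (n : ℕ) : Real.logb 2 (4 ^ n : ℕ) = 2 * n := by
  rw [Nat.cast_pow, Real.logb_pow, show ((4 : ℕ) : ℝ) = 2 ^ 2 by norm_num, Real.logb_pow,
    Real.logb_self_eq_one one_lt_two]
  push_cast
  ring

lemma logb_two_eight_mul {x : ℕ} (hx : 0 < x) : Real.logb 2 (8 * x : ℕ) = 3 + Real.logb 2 x := by
  rw [logb_natCast_mul 2 (by norm_num) hx, show ((8 : ℕ) : ℝ) = 2 ^ 3 by norm_num, Real.logb_pow,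
    Real.logb_self_eq_one one_lt_two]
  norm_num

lemma logb_two_add_le_of_mul_le {M N n L : ℕ} (hM : 0 < M) (hN : 0 < N) (hL : 0 < L) (hn : n ≤ L)
    (h : M * N ≤ (4 * n + 1) * 4 ^ n) :
    Real.logb 2 M + Real.logb 2 N ≤ Real.logb 2 L + 3 + 2 * n := by
  have hle : M * N ≤ 8 * L * 4 ^ n := h.trans (Nat.mul_le_mul_right _ (by omega))
  calc Real.logb 2 M + Real.logb 2 N = Real.logb 2 (M * N : ℕ) := (logb_natCast_mul 2 hM hN).symm
    _ ≤ Real.logb 2 (8 * L * 4 ^ n : ℕ) :=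
        Real.logb_le_logb_of_le one_lt_two (by positivity) (by exact_mod_cast hle)
    _ = Real.logb 2 L + 3 + 2 * n := by
        rw [logb_natCast_mul 2 (by positivity) (by positivity), logb_two_eight_mul hL,
          logb_two_four_pow, add_comm 3]

lemma clog_two_mul_four_pow_mul_le {M x : ℕ} (e : ℕ) (hM : 0 < M) (hx : 0 < x) :
    (Nat.clog 2 (M * (4 ^ e * x)) : ℝ) ≤ Real.logb 2 M + 2 * e + Real.logb 2 x + 1 := by
  have := clog_two_le_logb_add_one (M * (4 ^ e * x))
  rw [logb_natCast_mul 2 hM (by positivity), logb_natCast_mul 2 (by positivity) hx,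
    logb_two_four_pow] at this
  linarith

lemma clog_two_eight_mul_le {x : ℕ} (hx : 0 < x) :
    (Nat.clog 2 (8 * x) : ℝ) ≤ Real.logb 2 x + 4 := by
  have := clog_two_le_logb_add_one (8 * x)
  rw [logb_two_eight_mul hx] at this
  linarith

lemma clog_two_eight_mul_mul_self_le {x : ℕ} (hx : 0 < x) :
    (Nat.clog 2 (8 * x * (8 * x)) : ℝ) ≤ 2 * Real.logb 2 x + 7 := by
  have := clog_two_le_logb_add_one (8 * x * (8 * x))
  rw [logb_natCast_mul 2 (by positivity) (by positivity), logb_two_eight_mul hx] at this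
  linarith

lemma card_msg (L : ℕ) : Fintype.card (Msg L) = 2 ^ L := by
  simp [ZMod.card]

variable {L m k : ℕ}

lemma exists_code_of_two_mul_add_le (hL : 2 * m + 2 * k ≤ L) :
    ∃ M : ℕ, 0 < M ∧
      M * #(balancedPairs (Fin (2 * m + 2 * k)) m k) ≤
        (4 * (2 * m + 2 * k) + 1) * 4 ^ (2 * m + 2 * k) ∧
      ∃ C : Code L, IsZeroError C.base ∧
        C.base.stor 0 = Nat.clog 2 (M * (4 ^ (L - (2 * m + 2 * k)) *
          ((2 * m + 2 * k).choose m * (m + 2 * k).choose m))) ∧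
        C.base.stor 1 = Nat.clog 2 (8 * (m + 2 * k).choose k * (8 * (m + 2 * k).choose k)) ∧
        betaRate C.base 0 = Nat.clog 2 (M * (4 ^ (L - (2 * m + 2 * k)) *
          (2 * m + 2 * k).choose m)) ∧
        betaRate C.base 1 = Nat.clog 2 (8 * (m + 2 * k).choose k) := by
  set n := 2 * m + 2 * k
  set B := 8 * (m + 2 * k).choose k
  have hι : Fintype.card (Fin n) = 2 * m + 2 * k := Fintype.card_fin n
  obtain ⟨M, hM, seed, hseed⟩ := exists_resolving_seeds (β := Fin B) hι (Fintype.card_fin B).ge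
  choose index hindex using hseed
  have hsplit : Fintype.card (Msg L) = Fintype.card (Finset (Fin n) × Msg (L - n)) := by
    rw [Fintype.card_prod, Fintype.card_finset, card_msg, card_msg, Fintype.card_fin, ← pow_add,
      Nat.add_sub_cancel' hL]
  have hrests : Fintype.card (Msg (L - n) × Msg (L - n)) = 4 ^ (L - n) := by
    rw [Fintype.card_prod, card_msg, ← mul_pow]
    norm_num
  have hcommon : #(disjointPairs (Fin n) m) = n.choose m * (m + 2 * k).choose m := by
    rw [card_disjointPairs, Fintype.card_fin, show n - m = m + 2 * k by omega]
  let C := subsetScheme hι (Fintype.equivOfCardEq hsplit) seed index hindex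
  refine ⟨M, Fin.pos (index default), by simpa using hM, ⟨Fin 2, C.toCodeBase⟩,
    C.isZeroError_toCodeBase, ?_, ?_, ?_, ?_⟩
  · simp only [Scheme.toCodeBase, Matrix.cons_val_zero, Fintype.card_prod (Fin M),
      Fintype.card_prod (_ × _), hrests, Fintype.card_coe, hcommon, Fintype.card_fin]
  · simp [Scheme.toCodeBase]
  · rw [Scheme.betaRate_toCodeBase]
    simp only [Scheme.toCodeBase, Matrix.cons_val_zero, Fintype.card_prod (Fin M),
      Fintype.card_prod (_ × _), hrests, Fintype.card_coe, card_powersetCard, card_univ,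
      Fintype.card_fin]
  · rw [Scheme.betaRate_toCodeBase]
    simp [Scheme.toCodeBase]

lemma logb_card_balancedPairs {ι : Type*} [Fintype ι] [DecidableEq ι] (b : ℝ)
    (hι : Fintype.card ι = 2 * m + 2 * k) :
    Real.logb b #(balancedPairs ι m k) =
      Real.logb b (2 * m + 2 * k)! - 2 * Real.logb b m ! - 2 * Real.logb b k ! := by
  have hpos {a b : ℕ} (h : b ≤ a) : 0 < a.choose b := Nat.choose_pos h
  rw [card_balancedPairs hι, logb_natCast_mul b (hpos (by omega))
      (Nat.mul_pos (hpos (by omega)) (hpos (by omega))),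
    logb_natCast_mul b (hpos (by omega)) (hpos (by omega)),
    logb_choose_of_eq_add b (i := m + k) (by ring), logb_choose_of_eq_add b (Nat.add_comm m k),
    logb_choose_of_eq_add b rfl]
  ring

lemma exists_code_rates_le (hL₀ : 0 < L) (hL : 2 * m + 2 * k ≤ L) :
    ∃ C : Code L, IsZeroError C.base ∧
      ((C.base.stor 0 + C.base.stor 1 : ℕ) : ℝ) / 2 ≤
        (Real.logb 2 L + 2 * L - Real.logb 2 ((k + k).choose k : ℕ)
          + 2 * Real.logb 2 ((m + k + k).choose k : ℕ) + 11) / 2 ∧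
      (betaRate C.base 0 + betaRate C.base 1) / 2 ≤
        (Real.logb 2 L + 2 * L - Real.logb 2 ((m + k).choose k : ℕ) + 8) / 2 := by
  obtain ⟨M, hM, hseeds, C, hC, hstor₀, hstor₁, hbeta₀, hbeta₁⟩ :=
    exists_code_of_two_mul_add_le hL
  refine ⟨C, hC, ?_⟩
  have hι : Fintype.card (Fin (2 * m + 2 * k)) = 2 * m + 2 * k := Fintype.card_fin _
  have hlogM := logb_two_add_le_of_mul_le hM (card_balancedPairs_pos hι) hL₀ hL hseeds
  have hfirst : 0 < (2 * m + 2 * k).choose m := Nat.choose_pos (by omega)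
  have hsecond : 0 < (m + 2 * k).choose m := Nat.choose_pos (by omega)
  have hhash : 0 < (m + 2 * k).choose k := Nat.choose_pos (by omega)
  have hstor₀_le := hstor₀ ▸ clog_two_mul_four_pow_mul_le (L - (2 * m + 2 * k)) hM
    (Nat.mul_pos hfirst hsecond)
  have hstor₁_le := hstor₁ ▸ clog_two_eight_mul_mul_self_le hhash
  have hbeta₀_le := hbeta₀.trans_le
    (clog_two_mul_four_pow_mul_le (L - (2 * m + 2 * k)) hM hfirst)
  have hbeta₁_le := hbeta₁.trans_le (clog_two_eight_mul_le hhash)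
  rw [logb_card_balancedPairs 2 hι] at hlogM
  rw [logb_natCast_mul 2 hfirst hsecond, logb_choose_of_eq_add 2 (i := 2 * k) (add_comm _ _)]
    at hstor₀_le
  rw [logb_choose_of_eq_add 2 (i := m + 2 * k) (by ring), Nat.cast_sub hL] at hstor₀_le hbeta₀_le
  rw [logb_choose_of_eq_add 2 (i := m + k) (by ring)] at hstor₁_le hbeta₁_le
  rw [logb_choose_of_eq_add 2 (rfl : k + k = k + k),
    logb_choose_of_eq_add 2 (rfl : m + k + k = m + k + k),
    logb_choose_of_eq_add 2 (rfl : m + k = m + k), add_assoc m k k, ← two_mul]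
  push_cast at *
  constructor <;> linarith

end FiniteRates

section Asymptotics

open Filter Topology

open scoped Nat

lemma mul_log_sub_le_log_factorial (n : ℕ) : n * Real.log n - n ≤ Real.log n ! := by
  rcases eq_or_ne n 0 with rfl | hn
  · simp
  have hlog : 0 ≤ Real.log n := Real.log_natCast_nonneg n
  have htwo : 0 ≤ Real.log (2 * Real.pi) := Real.log_nonneg (by linarith [Real.pi_gt_three])
  have := Stirling.le_log_factorial_stirling hn
  linarith

lemma log_factorial_le {n : ℕ} (hn : n ≠ 0) :
    Real.log n ! ≤ n * Real.log n - n + Real.log n + 1 := by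
  obtain ⟨n, rfl⟩ := Nat.exists_eq_succ_of_ne_zero hn
  have hseq := Stirling.log_stirlingSeq'_antitone (Nat.zero_le n)
  have hone : Real.log (Stirling.stirlingSeq 1) = 1 - Real.log 2 / 2 := by
    rw [Stirling.stirlingSeq_one, Real.log_div (Real.exp_ne_zero 1) (by positivity), Real.log_exp,
      Real.log_sqrt two_pos.le]
  have hpos : (0 : ℝ) < n.succ := by positivity
  have hlog : 0 ≤ Real.log n.succ := Real.log_natCast_nonneg _
  simp only [Function.comp_apply] at hseq
  rw [hone, Stirling.log_stirlingSeq_formula, Real.log_mul two_ne_zero hpos.ne',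
    Real.log_div hpos.ne' (Real.exp_ne_zero 1), Real.log_exp] at hseq
  linarith

lemma tendsto_log_div_natCast : Tendsto (fun n : ℕ => Real.log n / n) atTop (𝓝 0) :=
  Real.isLittleO_log_id_atTop.tendsto_div_nhds_zero.comp tendsto_natCast_atTop_atTop

variable {a b : ℕ → ℕ} {x y : ℝ}

lemma tendsto_log_factorial_remainder_div (ha : ∀ n, a n ≤ n) :
    Tendsto (fun n : ℕ => (Real.log (a n)! - (a n * Real.log (a n) - a n)) / n) atTop (𝓝 0) := by
  have hbound : Tendsto (fun n : ℕ => Real.log n / n + 1 / n) atTop (𝓝 0) := by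
    simpa using tendsto_log_div_natCast.add tendsto_one_div_atTop_nhds_zero_nat
  refine squeeze_zero (fun n => ?_) (fun n => ?_) hbound
  · exact div_nonneg (sub_nonneg.2 (mul_log_sub_le_log_factorial _)) n.cast_nonneg
  · rw [← add_div]
    gcongr
    have hlog : 0 ≤ Real.log n := Real.log_natCast_nonneg n
    rcases eq_or_ne (a n) 0 with h | h
    · simp only [h, Nat.factorial_zero, Nat.cast_one, Real.log_one, CharP.cast_eq_zero]
      linarith
    · have hle : Real.log (a n) ≤ Real.log n :=
        Real.log_le_log (by exact_mod_cast Nat.pos_of_ne_zero h) (by exact_mod_cast ha n)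
      linarith [log_factorial_le h]

lemma tendsto_log_factorial_div (ha : ∀ n, a n ≤ n)
    (hx : Tendsto (fun n => (a n : ℝ) / n) atTop (𝓝 x)) :
    Tendsto (fun n : ℕ => (Real.log (a n)! - (a n * Real.log n - a n)) / n) atTop
      (𝓝 (x * Real.log x)) := by
  have hmain := (Real.continuous_mul_log.tendsto x).comp hx
  rw [← add_zero (x * Real.log x)]
  refine (hmain.add (tendsto_log_factorial_remainder_div ha)).congr' ?_
  filter_upwards [eventually_ne_atTop 0] with n hn
  rcases eq_or_ne (a n) 0 with h | h
  · simp [h]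
  · simp only [Function.comp_apply]
    rw [Real.log_div (by exact_mod_cast h) (by exact_mod_cast hn)]
    field_simp
    ring

lemma tendsto_logb_choose_div (hab : ∀ n, a n + b n ≤ n)
    (hx : Tendsto (fun n => (a n : ℝ) / n) atTop (𝓝 x))
    (hy : Tendsto (fun n => (b n : ℝ) / n) atTop (𝓝 y)) :
    Tendsto (fun n : ℕ => Real.logb 2 ((a n + b n).choose (b n) : ℕ) / n) atTop
      (𝓝 (hent [x, y] - hent [x + y])) := by
  have hxy : Tendsto (fun n => ((a n + b n : ℕ) : ℝ) / n) atTop (𝓝 (x + y)) := by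
    simpa only [Nat.cast_add, add_div] using hx.add hy
  have ha := tendsto_log_factorial_div (fun n => (Nat.le_add_right _ _).trans (hab n)) hx
  have hb := tendsto_log_factorial_div (fun n => (Nat.le_add_left _ _).trans (hab n)) hy
  have hlim := (((tendsto_log_factorial_div hab hxy).sub ha).sub hb).div_const (Real.log 2)
  have heq : hent [x, y] - hent [x + y] =
      ((x + y) * Real.log (x + y) - x * Real.log x - y * Real.log y) / Real.log 2 := by
    simp only [hent, List.map_cons, List.map_nil, List.sum_cons, List.sum_nil, Real.logb]
    ring
  rw [heq]
  refine hlim.congr fun n => ?_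
  rw [logb_choose_of_eq_add 2 rfl]
  push_cast
  simp only [Real.logb]
  ring

end Asymptotics

section Rates

open Filter Topology

lemma mem_Region_of_tendsto {f g : ℕ → ℝ} {α β : ℝ}
    (hcode : ∀ᶠ L in atTop, ∃ C : Code L, IsZeroError C.base ∧
      ((C.base.stor 0 + C.base.stor 1 : ℕ) : ℝ) / 2 ≤ f L ∧
      (betaRate C.base 0 + betaRate C.base 1) / 2 ≤ g L)
    (hf : Tendsto (fun L => f L / L) atTop (𝓝 α)) (hg : Tendsto (fun L => g L / L) atTop (𝓝 β)) :
    (α, β) ∈ Region := by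
  intro ε hε
  apply eventually_atTop.1
  filter_upwards [hcode, eventually_gt_atTop 0, hf.eventually_lt_const (lt_add_of_pos_right α hε),
    hg.eventually_lt_const (lt_add_of_pos_right β hε)] with L ⟨C, hC, hstor, hbeta⟩ hL hfL hgL
  have hL' : (0 : ℝ) < L := by exact_mod_cast hL
  rw [div_lt_iff₀' hL'] at hfL hgL
  exact ⟨C, hC, hstor.trans hfL.le, hbeta.trans hgL.le⟩

/-- The limiting storage rate of the subset schemes in which the common parts have relative size
`μ` and the private parts have relative size `κ`. -/
noncomputable def storageRate (μ κ : ℝ) : ℝ :=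
  (2 - (hent [κ, κ] - hent [κ + κ]) + 2 * (hent [μ + κ, κ] - hent [μ + κ + κ])) / 2

/-- The limiting retrieval rate of the subset schemes in which the common parts have relative size
`μ` and the private parts have relative size `κ`. -/
noncomputable def retrievalRate (μ κ : ℝ) : ℝ :=
  (2 - (hent [μ, κ] - hent [μ + κ])) / 2

lemma tendsto_logb_two_add_two_mul_add_const_div (c : ℝ) :
    Tendsto (fun L : ℕ => (Real.logb 2 L + 2 * L + c) / L) atTop (𝓝 2) := by
  have hlogb : Tendsto (fun L : ℕ => Real.logb 2 L / L) atTop (𝓝 0) := by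
    simpa only [Real.logb, div_right_comm, zero_div] using
      tendsto_log_div_natCast.div_const (Real.log 2)
  have hlim := (hlogb.add_const 2).add (tendsto_const_div_atTop_nhds_zero_nat c)
  rw [zero_add, add_zero] at hlim
  refine hlim.congr' ?_
  filter_upwards [eventually_ne_atTop 0] with L hL
  field_simp

theorem statement9_general {μ κ : ℝ} (hμ : 0 ≤ μ) (hκ : 0 ≤ κ) (hμκ : 2 * μ + 2 * κ ≤ 1) :
    (storageRate μ κ, retrievalRate μ κ) ∈ Region := by
  have hfloor {c : ℝ} (hc : 0 ≤ c) : Tendsto (fun L : ℕ => (⌊c * L⌋₊ : ℝ) / L) atTop (𝓝 c) :=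
    (tendsto_nat_floor_mul_div_atTop hc).comp tendsto_natCast_atTop_atTop
  set m : ℕ → ℕ := fun L => ⌊μ * L⌋₊
  set k : ℕ → ℕ := fun L => ⌊κ * L⌋₊
  have hm : Tendsto (fun L => (m L : ℝ) / L) atTop (𝓝 μ) := hfloor hμ
  have hk : Tendsto (fun L => (k L : ℝ) / L) atTop (𝓝 κ) := hfloor hκ
  have hmk : Tendsto (fun L => ((m L + k L : ℕ) : ℝ) / L) atTop (𝓝 (μ + κ)) := by
    simpa only [Nat.cast_add, add_div] using hm.add hk
  have hsize (L : ℕ) : 2 * m L + 2 * k L ≤ L := by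
    have hmL : (m L : ℝ) ≤ μ * L := Nat.floor_le (by positivity)
    have hkL : (k L : ℝ) ≤ κ * L := Nat.floor_le (by positivity)
    have : (2 * m L + 2 * k L : ℝ) ≤ L := by nlinarith [L.cast_nonneg (α := ℝ)]
    exact_mod_cast this
  have hpriv := tendsto_logb_choose_div (fun L => by linarith [hsize L]) hk hk
  have hhash := tendsto_logb_choose_div (fun L => by linarith [hsize L]) hmk hk
  have hcommon := tendsto_logb_choose_div (fun L => by linarith [hsize L]) hm hk
  have hstor := (((tendsto_logb_two_add_two_mul_add_const_div 11).sub hpriv).add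
    (hhash.const_mul 2)).div_const 2
  have hbeta := ((tendsto_logb_two_add_two_mul_add_const_div 8).sub hcommon).div_const 2
  refine mem_Region_of_tendsto ((eventually_gt_atTop 0).mono fun L hL =>
    exists_code_rates_le hL (hsize L)) (hstor.congr fun L => ?_) (hbeta.congr fun L => ?_)
  · ring
  · ring

lemma div_mul_logb_div (b t : ℝ) {c : ℝ} (hc : c ≠ 0) :
    t / c * Real.logb b (t / c) = (t * Real.logb b t - t * Real.logb b c) / c := by
  rcases eq_or_ne t 0 with rfl | ht
  · simp
  · rw [Real.logb_div ht hc]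
    ring

lemma logb_two_four : Real.logb 2 4 = 2 := by
  simpa using logb_two_four_pow 1

lemma alphaCurve_eq_storageRate (p : ℝ) : alphaCurve p = storageRate (1 / 4) ((1 - p) / 4) := by
  have hsix : Real.logb 2 6 = 1 + Real.logb 2 3 := by
    rw [show (6 : ℝ) = 2 * 3 by norm_num, Real.logb_mul two_ne_zero three_ne_zero,
      Real.logb_self_eq_one one_lt_two]
  simp only [alphaCurve, storageRate, hent, List.map_cons, List.map_nil, List.sum_cons,
    List.sum_nil]
  rw [show (1 - p) / 4 + (1 - p) / 4 = (1 - p) / 2 by ring,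
    show 1 / 4 + (1 - p) / 4 = (2 - p) / 4 by ring,
    show (2 - p) / 4 + (1 - p) / 4 = (3 - 2 * p) / 4 by ring]
  simp only [div_mul_logb_div _ _ two_ne_zero, div_mul_logb_div _ _ three_ne_zero,
    div_mul_logb_div _ _ four_ne_zero, div_mul_logb_div _ _ (by norm_num : (6 : ℝ) ≠ 0),
    logb_two_four, hsix, Real.logb_self_eq_one one_lt_two, Real.logb_one]
  ring

lemma betaCurve_eq_retrievalRate (p : ℝ) :
    betaCurve p = retrievalRate (1 / 4) ((1 - p) / 4) := by
  simp only [betaCurve, retrievalRate, hent, List.map_cons, List.map_nil, List.sum_cons,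
    List.sum_nil]
  rw [show 1 / 4 + (1 - p) / 4 = (2 - p) / 4 by ring]
  simp only [div_mul_logb_div _ _ two_ne_zero, div_mul_logb_div _ _ four_ne_zero, logb_two_four,
    Real.logb_self_eq_one one_lt_two, Real.logb_one]
  ring

end Rates

/-- For every `p ∈ [0,1]`, the pair `(ᾱ(p), β̄(p))` belongs to the
achievable storage-retrieval rate region `R` of the (2,2) PIR problem. -/
theorem statement9 (p : ℝ) (hp : p ∈ Set.Icc (0:ℝ) 1) :
    (alphaCurve p, betaCurve p) ∈ Region := by
  rw [alphaCurve_eq_storageRate, betaCurve_eq_retrievalRate]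
  exact statement9_general (by norm_num) (by linarith [hp.2]) (by linarith [hp.1])

end PIR
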